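/- Let i ∈ {1,2}. Suppose that the following statements are all true: (a) T(71, 0; 96, 96, 96); (b) T(n, 96; t(n−24), t(n−24), 0) for every n ∈ {56, …, 79}; (c) T(n, t(n); s_i(n−24), 0, 0) for every n ∈ {32, …, 55}; and (d) T(n, s_i(n); 0, 0, 0) for every n ∈ {8, …, 31}. Then T(n, s_i(n); 0, 0, 0) is true for every n ≥ 8; i.e., for every n ≥ 8 there exist ℓ_1, m_1, …, ℓ_{s_i(n)}, m_{s_i(n)} ∈ ℂ^{n+1} with dim_ℂ Σ_{j=1}^{s_i(n)} (ℓ_j²·U + ℓ_j·m_j·U) = min{(2n+1)·s_i(n), C(n+3,3)}. -/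

import Mathlib

open MvPolynomial

/-- The linear form associated with a coefficient vector `v ∈ ℂ^{n+1}`. -/
noncomputable def lin {n : ℕ} (v : Fin (n + 1) → ℂ) : MvPolynomial (Fin (n + 1)) ℂ :=
  ∑ j, MvPolynomial.C (v j) * MvPolynomial.X j

/-- The subspace `f·U = {f·u : u ∈ U}` of the polynomial ring, where `U` is the
space of linear forms. -/
noncomputable def mulU {n : ℕ} (f : MvPolynomial (Fin (n + 1)) ℂ) :
    Submodule ℂ (MvPolynomial (Fin (n + 1)) ℂ) :=
  Submodule.span ℂ (Set.range fun j : Fin (n + 1) => f * MvPolynomial.X j)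

/-- The affine cone `ℓ^{d-1}·U + ℓ^{d-2}·m·U` over the tangent space to the tangential
variety `T_{n,d}` of the `d`-th Veronese variety at the point `[ℓ^{d-1} m]`. -/
noncomputable def tanCone {n : ℕ} (d : ℕ) (ℓ m : Fin (n + 1) → ℂ) :
    Submodule ℂ (MvPolynomial (Fin (n + 1)) ℂ) :=
  mulU (lin ℓ ^ (d - 1)) ⊔ mulU (lin ℓ ^ (d - 2) * lin m)

/-- `v ∈ U_{i+1}`, i.e. the coordinates of `v` indexed by `{24i, …, 24i+23}` vanish. -/
def memU {n : ℕ} (i : Fin 3) (v : Fin (n + 1) → ℂ) : Prop :=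
  ∀ j : Fin (n + 1), 24 * (i : ℕ) ≤ (j : ℕ) → (j : ℕ) < 24 * (i : ℕ) + 24 → v j = 0

/-- `S_3(U_{i+1})`: the span of all products of three linear forms belonging to `U_{i+1}`. -/
noncomputable def S3U {n : ℕ} (i : Fin 3) : Submodule ℂ (MvPolynomial (Fin (n + 1)) ℂ) :=
  Submodule.span ℂ
    {p | ∃ a b c : Fin (n + 1) → ℂ,
      memU i a ∧ memU i b ∧ memU i c ∧ p = lin a * lin b * lin c}

/-- `v ∈ U_K`, the span of the variables `x_0, …, x_71`. -/
def memK {n : ℕ} (v : Fin (n + 1) → ℂ) : Prop :=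
  ∀ j : Fin (n + 1), 72 ≤ (j : ℕ) → v j = 0

/-- `S_3(U_K)`: the span of all products of three linear forms in `x_0, …, x_71`. -/
noncomputable def S3K (n : ℕ) : Submodule ℂ (MvPolynomial (Fin (n + 1)) ℂ) :=
  Submodule.span ℂ
    {p | ∃ a b c : Fin (n + 1) → ℂ,
      memK a ∧ memK b ∧ memK c ∧ p = lin a * lin b * lin c}

/-- The alternating sum `Σ_{j=1}^k (−1)^{j−1} C(k,j) · C(n−24j+3, 3)` (with the convention
`C(m,3) = 0` for `m < 3`, realized by truncated subtraction `n+3−24j`). -/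
def altsum (n k : ℕ) : ℤ :=
  ∑ j ∈ Finset.Icc 1 k, (-1 : ℤ) ^ (j - 1) * (k.choose j : ℤ) * ((n + 3 - 24 * j).choose 3 : ℤ)

/-- `k = #{i : a_i ≠ 0}`. -/
def kcount (a : Fin 3 → ℕ) : ℕ := (Finset.univ.filter fun i => a i ≠ 0).card

/-- The expected dimension `w(n, s; a_1, a_2, a_3)`, as an integer. -/
def expdimZ (n s : ℕ) (a : Fin 3 → ℕ) : ℤ :=
  min (altsum n (kcount a) + 48 * ((a 0 + a 1 + a 2 : ℕ) : ℤ) + (2 * n + 1) * s)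
    (((n + 3).choose 3 : ℤ))

/-- The subspace `W(n, s; a_1, a_2, a_3)` determined by the given points. -/
noncomputable def Wspace {n s : ℕ} {a : Fin 3 → ℕ}
    (ℓ m : Fin s → Fin (n + 1) → ℂ)
    (ℓ' m' : (i : Fin 3) → Fin (a i) → Fin (n + 1) → ℂ) :
    Submodule ℂ (MvPolynomial (Fin (n + 1)) ℂ) :=
  (⨆ i : {i : Fin 3 // a i ≠ 0},
      (S3U i.1 ⊔ ⨆ j : Fin (a i.1), tanCone 3 (ℓ' i.1 j) (m' i.1 j)))
    ⊔ ⨆ i : Fin s, tanCone 3 (ℓ i) (m i)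

/-- The statement `T(n, s; a_1, a_2, a_3)`: some choice of points realizes the expected
dimension `w(n, s; a_1, a_2, a_3)`. -/
def TStmt (n s : ℕ) (a : Fin 3 → ℕ) : Prop :=
  ∃ (ℓ m : Fin s → Fin (n + 1) → ℂ)
    (ℓ' m' : (i : Fin 3) → Fin (a i) → Fin (n + 1) → ℂ),
    (∀ (i : Fin 3) (j : Fin (a i)), memU i (ℓ' i j) ∧ memU i (m' i j)) ∧
    (Module.finrank ℂ (Wspace ℓ m ℓ' m') : ℤ) = expdimZ n s a

/-- `s_1(n) = 48k² + (11+4r)k + ⌊(4r²+22r+33)/48⌋` where `n = 24k + r`. -/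
def s1 (n : ℕ) : ℕ :=
  48 * (n / 24) ^ 2 + (11 + 4 * (n % 24)) * (n / 24) +
    (4 * (n % 24) ^ 2 + 22 * (n % 24) + 33) / 48

/-- `s_2(n) = s_1(n) + 1`. -/
def s2 (n : ℕ) : ℕ := s1 n + 1

/-- `t(n) = 4n − 37`. -/
def tfun (n : ℕ) : ℕ := 4 * n - 37

/-- The expected codimension `c(n)` of `W(n, t(n); s_1(n−24), 0, 0)`. -/
def cInt (n : ℕ) : ℤ :=
  ((n + 3).choose 3 : ℤ) - ((n - 21).choose 3 : ℤ) - (tfun n : ℤ) * (2 * n + 1) -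
    48 * (s1 (n - 24) : ℤ)

/-! ### Cubic forms -/

/-- The space of cubic forms. -/
noncomputable abbrev H3 (n : ℕ) : Submodule ℂ (MvPolynomial (Fin (n + 1)) ℂ) :=
  homogeneousSubmodule (Fin (n + 1)) ℂ 3

instance H3_fin (n : ℕ) : FiniteDimensional ℂ (H3 n) :=
  Module.Finite.iff_fg.mpr (homogeneousSubmodule_fg (R := ℂ) (σ := Fin (n + 1)) 3)

theorem fin_of_le {n : ℕ} {W : Submodule ℂ (MvPolynomial (Fin (n + 1)) ℂ)} (h : W ≤ H3 n) :
    FiniteDimensional ℂ W :=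
  Submodule.finiteDimensional_of_le h

theorem finrank_H3 (n : ℕ) : Module.finrank ℂ (H3 n) = (n + 3).choose 3 := by
  classical
  have h1 : H3 n = restrictSupport ℂ {d : Fin (n + 1) →₀ ℕ | d.degree = 3} :=
    homogeneousSubmodule_eq_finsupp_supported _ _ _
  have e2 : {d : Fin (n + 1) →₀ ℕ | d.degree = 3} ≃ Sym (Fin (n + 1)) 3 :=
    (Sym.equivNatSum (Fin (n + 1)) 3).symm
  rw [h1, Module.finrank_eq_card_basis ((basisRestrictSupport ℂ _).reindex e2),
    Sym.card_sym_eq_choose]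
  simp

theorem H3_le {n : ℕ} {W : Submodule ℂ (MvPolynomial (Fin (n + 1)) ℂ)}
    (h : ∀ a b c : Fin (n + 1),
      (X a * X b * X c : MvPolynomial (Fin (n + 1)) ℂ) ∈ W) : H3 n ≤ W := by
  rw [H3, ← homogeneousSubmodule_one_pow, homogeneousSubmodule_one_eq_span_X,
    pow_three', Submodule.span_mul_span, Submodule.span_mul_span, Submodule.span_le]
  rintro _ ⟨_, ⟨_, ⟨a, rfl⟩, _, ⟨b, rfl⟩, rfl⟩, _, ⟨c, rfl⟩, rfl⟩
  exact h a b c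

theorem lin_hom {n : ℕ} (v : Fin (n + 1) → ℂ) : (lin v).IsHomogeneous 1 := by
  unfold lin
  refine IsHomogeneous.sum _ _ _ fun j _ => ?_
  simpa using (isHomogeneous_C (Fin (n + 1)) (v j)).mul (isHomogeneous_X ℂ j)

theorem mulU_le {n : ℕ} {f : MvPolynomial (Fin (n + 1)) ℂ} (hf : f.IsHomogeneous 2) :
    mulU f ≤ H3 n := by
  unfold mulU
  rw [Submodule.span_le]
  rintro _ ⟨j, rfl⟩
  exact hf.mul (isHomogeneous_X ℂ j)

theorem tanCone_eq {n : ℕ} (ℓ m : Fin (n + 1) → ℂ) :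
    tanCone 3 ℓ m = mulU (lin ℓ ^ 2) ⊔ mulU (lin ℓ * lin m) := by
  simp [tanCone]

theorem tanCone_le {n : ℕ} (ℓ m : Fin (n + 1) → ℂ) : tanCone 3 ℓ m ≤ H3 n := by
  rw [tanCone_eq]
  refine sup_le (mulU_le ?_) (mulU_le ((lin_hom ℓ).mul (lin_hom m)))
  simpa using (lin_hom ℓ).pow 2

theorem S3U_le {n : ℕ} (i : Fin 3) : S3U (n := n) i ≤ H3 n := by
  unfold S3U
  rw [Submodule.span_le]
  rintro _ ⟨a, b, c, -, -, -, rfl⟩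
  exact ((lin_hom a).mul (lin_hom b)).mul (lin_hom c)

/-! ### Semicontinuity of the rank -/

theorem semicont {M ι : Type*} [AddCommGroup M] [Module ℂ M] (v : ℂ → ι → M)
    (hv : ∀ k, ∃ u₀ u₁ u₂ : M, ∀ t : ℂ, v t k = u₀ + t • u₁ + t ^ 2 • u₂)
    (hfin : ∀ t, FiniteDimensional ℂ (Submodule.span ℂ (Set.range (v t)))) (t₀ : ℂ) (d : ℕ)
    (hd : d ≤ Module.finrank ℂ (Submodule.span ℂ (Set.range (v t₀)))) :
    {t | Module.finrank ℂ (Submodule.span ℂ (Set.range (v t))) < d}.Finite := by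
  classical
  have := hfin t₀
  obtain ⟨f, hf, -, hli⟩ := Submodule.exists_fun_fin_finrank_span_eq ℂ (Set.range (v t₀))
  choose k hk using hf
  generalize Module.finrank ℂ (Submodule.span ℂ (Set.range (v t₀))) = N at *
  obtain ⟨g, hg⟩ := LinearMap.exists_leftInverse_of_injective
    (Fintype.linearCombination ℂ f) (LinearMap.ker_eq_bot'.mpr fun c hc =>
      funext (Fintype.linearIndependent_iff.mp hli c
        (by simpa [Fintype.linearCombination_apply] using hc)))
  choose u₀ u₁ u₂ hu using hv
  let A : Matrix (Fin N) (Fin N) (Polynomial ℂ) := fun i j =>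
    Polynomial.C (g (u₀ (k i)) j) + Polynomial.X * Polynomial.C (g (u₁ (k i)) j)
      + Polynomial.X ^ 2 * Polynomial.C (g (u₂ (k i)) j)
  have hA : ∀ t, A.map (Polynomial.eval t) = Matrix.of fun i => g (v t (k i)) := by
    intro t
    ext i j
    rw [Matrix.map_apply, Matrix.of_apply]
    simp [A, hu]
    ring
  have hdet : ∀ t, A.det.eval t = (Matrix.of fun i => g (v t (k i))).det := by
    intro t
    rw [← hA, ← Polynomial.coe_evalRingHom, RingHom.map_det]
    rfl
  have hne : A.det ≠ 0 := by
    intro h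
    have h1 := hdet t₀
    have h2 : (Matrix.of fun i => g (v t₀ (k i))) = (1 : Matrix (Fin N) (Fin N) ℂ) := by
      ext i j
      have := congrArg (fun L => L (Pi.single i (1 : ℂ)) j) hg
      simp only [LinearMap.comp_apply, Fintype.linearCombination_apply_single, one_smul,
        LinearMap.id_apply] at this
      rw [Matrix.of_apply, hk, this, Matrix.one_apply, Pi.single_apply]
      simp only [eq_comm]
    rw [h2, h] at h1
    simp at h1
  refine (Polynomial.finite_setOfPred_isRoot hne).subset ?_
  intro t ht
  by_contra hroot
  have hdt : (Matrix.of fun i => g (v t (k i))).det ≠ 0 := by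
    rw [← hdet]; exact hroot
  have hl := Matrix.linearIndependent_rows_of_det_ne_zero hdt
  have hl2 : LinearIndependent ℂ (fun i => v t (k i)) := by
    refine LinearIndependent.of_comp g ?_
    exact hl
  have h3 : N ≤ Module.finrank ℂ (Submodule.span ℂ (Set.range (v t))) := by
    have h4 := finrank_span_eq_card hl2
    rw [Fintype.card_fin] at h4
    rw [← h4]
    have := hfin t
    apply Submodule.finrank_mono
    apply Submodule.span_mono
    rintro _ ⟨i, rfl⟩
    exact ⟨k i, rfl⟩
  simp only [Set.mem_ofPred_eq] at ht
  omega

/-! ### Sums of tangent cones -/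

/-- The sum of the tangent cones at a family of points. -/
noncomputable def cone {n : ℕ} {ι : Type} (ℓ m : ι → Fin (n + 1) → ℂ) :
    Submodule ℂ (MvPolynomial (Fin (n + 1)) ℂ) :=
  ⨆ i, tanCone 3 (ℓ i) (m i)

theorem cone_le {n : ℕ} {ι : Type} (ℓ m : ι → Fin (n + 1) → ℂ) : cone ℓ m ≤ H3 n :=
  iSup_le fun _ => tanCone_le _ _

theorem lin_add {n : ℕ} (v w : Fin (n + 1) → ℂ) (t : ℂ) :
    lin (v + t • w) = lin v + t • lin w := by
  simp only [lin, Pi.add_apply, Pi.smul_apply, Finset.smul_sum, ← Finset.sum_add_distrib]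
  refine Finset.sum_congr rfl fun j _ => ?_
  rw [smul_eq_mul, C_add, C_mul, smul_eq_C_mul]
  ring

/-- Explicit generators of `F ⊔ cone ℓ m`. -/
noncomputable def gens {n : ℕ} {ι : Type} (F : Submodule ℂ (MvPolynomial (Fin (n + 1)) ℂ))
    (ℓ m : ι → Fin (n + 1) → ℂ) :
    F ⊕ (ι × Fin (n + 1)) ⊕ (ι × Fin (n + 1)) → MvPolynomial (Fin (n + 1)) ℂ
  | Sum.inl f => f
  | Sum.inr (Sum.inl (i, j)) => lin (ℓ i) ^ 2 * X j
  | Sum.inr (Sum.inr (i, j)) => lin (ℓ i) * lin (m i) * X j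

theorem span_gens {n : ℕ} {ι : Type} (F : Submodule ℂ (MvPolynomial (Fin (n + 1)) ℂ))
    (ℓ m : ι → Fin (n + 1) → ℂ) :
    Submodule.span ℂ (Set.range (gens F ℓ m)) = F ⊔ cone ℓ m := by
  apply le_antisymm
  · rw [Submodule.span_le]
    rintro _ ⟨k, rfl⟩
    rcases k with f | ⟨i, j⟩ | ⟨i, j⟩
    · exact Submodule.mem_sup_left f.2
    · apply Submodule.mem_sup_right
      apply Submodule.mem_iSup_of_mem i
      rw [tanCone_eq]
      exact Submodule.mem_sup_left (Submodule.subset_span ⟨j, rfl⟩)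
    · apply Submodule.mem_sup_right
      apply Submodule.mem_iSup_of_mem i
      rw [tanCone_eq]
      exact Submodule.mem_sup_right (Submodule.subset_span ⟨j, rfl⟩)
  · refine sup_le ?_ (iSup_le fun i => ?_)
    · intro f hf
      exact Submodule.subset_span ⟨Sum.inl ⟨f, hf⟩, rfl⟩
    · rw [tanCone_eq]
      refine sup_le ?_ ?_
      · unfold mulU
        rw [Submodule.span_le]
        rintro _ ⟨j, rfl⟩
        exact Submodule.subset_span ⟨Sum.inr (Sum.inl (i, j)), rfl⟩
      · unfold mulU
        rw [Submodule.span_le]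
        rintro _ ⟨j, rfl⟩
        exact Submodule.subset_span ⟨Sum.inr (Sum.inr (i, j)), rfl⟩

theorem cone_semicont {n : ℕ} {ι : Type} (F : Submodule ℂ (MvPolynomial (Fin (n + 1)) ℂ))
    (hF : F ≤ H3 n) (ℓ₀ ℓ₁ m₀ m₁ : ι → Fin (n + 1) → ℂ) (t₀ : ℂ) (d : ℕ)
    (hd : d ≤ Module.finrank ℂ
      (F ⊔ cone (fun i => ℓ₀ i + t₀ • ℓ₁ i) (fun i => m₀ i + t₀ • m₁ i) :
        Submodule ℂ (MvPolynomial (Fin (n + 1)) ℂ))) :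
    {t : ℂ | Module.finrank ℂ
      (F ⊔ cone (fun i => ℓ₀ i + t • ℓ₁ i) (fun i => m₀ i + t • m₁ i) :
        Submodule ℂ (MvPolynomial (Fin (n + 1)) ℂ)) < d}.Finite := by
  have key := semicont (fun t : ℂ => gens F (fun i => ℓ₀ i + t • ℓ₁ i) (fun i => m₀ i + t • m₁ i))
    (by
      rintro (f | ⟨i, j⟩ | ⟨i, j⟩)
      · exact ⟨f, 0, 0, fun t => by simp [gens]⟩
      · refine ⟨lin (ℓ₀ i) ^ 2 * X j, 2 * lin (ℓ₀ i) * lin (ℓ₁ i) * X j,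
          lin (ℓ₁ i) ^ 2 * X j, fun t => ?_⟩
        simp only [gens, lin_add, smul_eq_C_mul, C_pow]
        ring
      · refine ⟨lin (ℓ₀ i) * lin (m₀ i) * X j,
          (lin (ℓ₀ i) * lin (m₁ i) + lin (ℓ₁ i) * lin (m₀ i)) * X j,
          lin (ℓ₁ i) * lin (m₁ i) * X j, fun t => ?_⟩
        simp only [gens, lin_add, smul_eq_C_mul, C_pow]
        ring)
    (by
      intro t
      apply fin_of_le
      rw [span_gens]
      exact sup_le hF (cone_le _ _)) t₀ d
  have hs : ∀ t : ℂ, Module.finrank ℂ (Submodule.span ℂ (Set.range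
      (gens F (fun i => ℓ₀ i + t • ℓ₁ i) (fun i => m₀ i + t • m₁ i)))) = Module.finrank ℂ
      (F ⊔ cone (fun i => ℓ₀ i + t • ℓ₁ i) (fun i => m₀ i + t • m₁ i) :
        Submodule ℂ (MvPolynomial (Fin (n + 1)) ℂ)) := fun t => by rw [span_gens]
  simp only [hs] at key
  exact key hd

/-! ### Extension of points to more variables -/

/-- Extension by zero of a coefficient vector along a map of variables. -/
noncomputable def ext0 {m n : ℕ} (e : Fin (m + 1) → Fin (n + 1)) (v : Fin (m + 1) → ℂ) :
    Fin (n + 1) → ℂ :=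
  fun j => ∑ i, if e i = j then v i else 0

theorem ext0_add {m n : ℕ} (e : Fin (m + 1) → Fin (n + 1)) (v w : Fin (m + 1) → ℂ) (t : ℂ) :
    ext0 e (v + t • w) = ext0 e v + t • ext0 e w := by
  ext j
  simp only [ext0, Pi.add_apply, Pi.smul_apply, Finset.smul_sum, ← Finset.sum_add_distrib]
  refine Finset.sum_congr rfl fun i _ => ?_
  split_ifs <;> simp

theorem lin_ext0 {m n : ℕ} (e : Fin (m + 1) → Fin (n + 1)) (v : Fin (m + 1) → ℂ) :
    lin (ext0 e v) = rename e (lin v) := by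
  simp only [lin, ext0, map_sum, map_mul, rename_C, rename_X, Finset.sum_mul]
  rw [Finset.sum_comm]
  refine Finset.sum_congr rfl fun i _ => ?_
  rw [Finset.sum_eq_single (e i)]
  · simp
  · intro j _ hj
    simp [hj.symm]
  · simp

theorem ext0_comp {m n : ℕ} (e : Fin (m + 1) → Fin (n + 1)) (he : Function.Injective e)
    (q : Fin (n + 1) → ℂ) (hq : ∀ j, j ∉ Set.range e → q j = 0) :
    ext0 e (q ∘ e) = q := by
  ext j
  unfold ext0
  by_cases hj : j ∈ Set.range e
  · obtain ⟨i, rfl⟩ := hj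
    rw [Finset.sum_eq_single i]
    · simp
    · intro k _ hk
      simp [he.ne hk]
    · simp
  · rw [hq j hj]
    refine Finset.sum_eq_zero fun i _ => ?_
    rw [if_neg]
    rintro rfl
    exact hj ⟨i, rfl⟩

theorem ext0_zero {m n : ℕ} (e : Fin (m + 1) → Fin (n + 1)) (v : Fin (m + 1) → ℂ)
    (j : Fin (n + 1)) (h : ∀ i, e i = j → v i = 0) : ext0 e v j = 0 := by
  refine Finset.sum_eq_zero fun i _ => ?_
  split_ifs with hi
  · exact h i hi
  · rfl

/-- The linear map on polynomials induced by a map of variables. -/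
noncomputable def phi {m n : ℕ} (e : Fin (m + 1) → Fin (n + 1)) :
    MvPolynomial (Fin (m + 1)) ℂ →ₗ[ℂ] MvPolynomial (Fin (n + 1)) ℂ :=
  (rename e).toLinearMap

theorem phi_mulU {m n : ℕ} (e : Fin (m + 1) → Fin (n + 1)) (f : MvPolynomial (Fin (m + 1)) ℂ) :
    (mulU f).map (phi e) ≤ mulU (rename e f) := by
  unfold mulU
  rw [Submodule.map_span_le]
  rintro _ ⟨j, rfl⟩
  refine Submodule.subset_span ⟨e j, ?_⟩
  simp [phi]

theorem phi_tanCone {m n : ℕ} (e : Fin (m + 1) → Fin (n + 1)) (ℓ v : Fin (m + 1) → ℂ) :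
    (tanCone 3 ℓ v).map (phi e) ≤ tanCone 3 (ext0 e ℓ) (ext0 e v) := by
  rw [tanCone_eq, tanCone_eq, Submodule.map_sup, lin_ext0, lin_ext0]
  refine sup_le_sup ?_ ?_
  · refine (phi_mulU e _).trans (le_of_eq ?_)
    rw [map_pow]
  · refine (phi_mulU e _).trans (le_of_eq ?_)
    rw [map_mul]

theorem phi_cone {m n : ℕ} (e : Fin (m + 1) → Fin (n + 1)) {ι : Type}
    (ℓ v : ι → Fin (m + 1) → ℂ) :
    (cone ℓ v).map (phi e) ≤ cone (fun i => ext0 e (ℓ i)) (fun i => ext0 e (v i)) := by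
  unfold cone
  rw [Submodule.map_iSup]
  exact iSup_mono fun i => phi_tanCone e _ _

theorem phi_S3U {m n : ℕ} (e : Fin (m + 1) → Fin (n + 1)) (i : Fin 3)
    (h : ∀ v : Fin (m + 1) → ℂ, memU i v → memU i (ext0 e v)) :
    (S3U (n := m) i).map (phi e) ≤ S3U (n := n) i := by
  unfold S3U
  rw [Submodule.map_span_le]
  rintro _ ⟨a, b, c, ha, hb, hc, rfl⟩
  refine Submodule.subset_span ⟨ext0 e a, ext0 e b, ext0 e c, h _ ha, h _ hb, h _ hc, ?_⟩
  simp [phi, lin_ext0]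

/-- Two open conditions on the same family of points can be realized simultaneously. -/
theorem merge {m n : ℕ} (e : Fin (m + 1) → Fin (n + 1)) {ι : Type}
    (F₁ : Submodule ℂ (MvPolynomial (Fin (m + 1)) ℂ))
    (F₂ : Submodule ℂ (MvPolynomial (Fin (n + 1)) ℂ)) (h₁ : F₁ ≤ H3 m) (h₂ : F₂ ≤ H3 n)
    (p p' q q' : ι → Fin (m + 1) → ℂ) (d₁ d₂ : ℕ)
    (hd₁ : d₁ ≤ Module.finrank ℂ
      (F₁ ⊔ cone p p' : Submodule ℂ (MvPolynomial (Fin (m + 1)) ℂ)))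
    (hd₂ : d₂ ≤ Module.finrank ℂ
      (F₂ ⊔ cone (fun i => ext0 e (q i)) (fun i => ext0 e (q' i)) :
        Submodule ℂ (MvPolynomial (Fin (n + 1)) ℂ))) :
    ∃ r r' : ι → Fin (m + 1) → ℂ,
      d₁ ≤ Module.finrank ℂ
        (F₁ ⊔ cone r r' : Submodule ℂ (MvPolynomial (Fin (m + 1)) ℂ)) ∧
      d₂ ≤ Module.finrank ℂ
        (F₂ ⊔ cone (fun i => ext0 e (r i)) (fun i => ext0 e (r' i)) :
          Submodule ℂ (MvPolynomial (Fin (n + 1)) ℂ)) := by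
  have k₁ := cone_semicont F₁ h₁ p (fun i => q i - p i) p' (fun i => q' i - p' i) 0 d₁
    (by
      have l₁ : (fun i => p i + (0 : ℂ) • (q i - p i)) = p := by ext; simp
      have l₂ : (fun i => p' i + (0 : ℂ) • (q' i - p' i)) = p' := by ext; simp
      rw [l₁, l₂]
      exact hd₁)
  have k₂ := cone_semicont F₂ h₂ (fun i => ext0 e (p i)) (fun i => ext0 e (q i - p i))
    (fun i => ext0 e (p' i)) (fun i => ext0 e (q' i - p' i)) 1 d₂
    (by
      have l₁ : (fun i => ext0 e (p i) + (1 : ℂ) • ext0 e (q i - p i)) =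
          fun i => ext0 e (q i) := by
        funext i
        rw [← ext0_add, one_smul, add_sub_cancel]
      have l₂ : (fun i => ext0 e (p' i) + (1 : ℂ) • ext0 e (q' i - p' i)) =
          fun i => ext0 e (q' i) := by
        funext i
        rw [← ext0_add, one_smul, add_sub_cancel]
      rw [l₁, l₂]
      exact hd₂)
  obtain ⟨t, ht⟩ := (k₁.union k₂).infinite_compl.nonempty
  simp only [Set.mem_compl_iff, Set.mem_union, Set.mem_ofPred_eq, not_or, not_lt] at ht
  refine ⟨fun i => p i + t • (q i - p i), fun i => p' i + t • (q' i - p' i), ht.1, ?_⟩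
  have l₁ : (fun i => ext0 e (p i + t • (q i - p i))) =
      fun i => ext0 e (p i) + t • ext0 e (q i - p i) := funext fun i => ext0_add _ _ _ _
  have l₂ : (fun i => ext0 e (p' i + t • (q' i - p' i))) =
      fun i => ext0 e (p' i) + t • ext0 e (q' i - p' i) := funext fun i => ext0_add _ _ _ _
  rw [l₁, l₂]
  exact ht.2

/-! ### Skipping a block of variables -/

/-- The embedding of variables skipping the block `i`. -/
def skip (m : ℕ) (i : Fin 3) (j : Fin (m + 1)) : Fin (m + 24 + 1) :=
  if (j : ℕ) < 24 * (i : ℕ) then ⟨j, by omega⟩ else ⟨j + 24, by omega⟩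

theorem skip_val (m : ℕ) (i : Fin 3) (j : Fin (m + 1)) :
    ((skip m i j : Fin (m + 24 + 1)) : ℕ) = if (j : ℕ) < 24 * (i : ℕ) then (j : ℕ) else j + 24 := by
  unfold skip
  split_ifs <;> rfl

theorem skip_inj (m : ℕ) (i : Fin 3) : Function.Injective (skip m i) := by
  intro a b h
  have h' := congrArg Fin.val h
  rw [skip_val, skip_val] at h'
  ext
  split_ifs at h' <;> omega

theorem skip_range (m : ℕ) (i : Fin 3) (hi : 24 * (i : ℕ) ≤ m + 1) (j : Fin (m + 24 + 1))
    (hj : (j : ℕ) < 24 * (i : ℕ) ∨ 24 * (i : ℕ) + 24 ≤ j) : j ∈ Set.range (skip m i) := by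
  rcases hj with hj | hj
  · refine ⟨⟨j, by omega⟩, ?_⟩
    ext
    rw [skip_val, if_pos hj]
  · refine ⟨⟨j - 24, by omega⟩, ?_⟩
    ext
    rw [skip_val]
    simp only
    split_ifs <;> omega

theorem memU_skip (m : ℕ) (i : Fin 3) (v : Fin (m + 1) → ℂ) : memU i (ext0 (skip m i) v) := by
  intro j h1 h2
  apply ext0_zero
  intro k hk
  exfalso
  have := congrArg Fin.val hk
  rw [skip_val] at this
  split_ifs at this <;> omega

theorem memU_skip_lt (m : ℕ) (i i' : Fin 3) (h : i' < i) (v : Fin (m + 1) → ℂ) (hv : memU i' v) :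
    memU i' (ext0 (skip m i) v) := by
  intro j h1 h2
  apply ext0_zero
  intro k hk
  have h3 := congrArg Fin.val hk
  have h4 : (i' : ℕ) < i := h
  rw [skip_val] at h3
  split_ifs at h3
  · exact hv k (by omega) (by omega)
  · omega

theorem ext0_skip (m : ℕ) (i : Fin 3) (hi : 24 * (i : ℕ) ≤ m + 1) (q : Fin (m + 24 + 1) → ℂ)
    (hq : memU i q) : ext0 (skip m i) (q ∘ skip m i) = q := by
  apply ext0_comp _ (skip_inj m i)
  intro j hj
  apply hq j
  · by_contra h
    exact hj (skip_range m i hi j (Or.inl (by omega)))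
  · by_contra h
    exact hj (skip_range m i hi j (Or.inr (by omega)))

theorem lin_single {n : ℕ} (j : Fin (n + 1)) : lin (Pi.single j (1 : ℂ)) = X j := by
  unfold lin
  rw [Finset.sum_eq_single j]
  · simp
  · intro k _ hk
    simp [hk]
  · simp

theorem S3U_eq (m : ℕ) (i : Fin 3) (hi : 24 * (i : ℕ) ≤ m + 1) :
    S3U (n := m + 24) i = (H3 m).map (phi (skip m i)) := by
  apply le_antisymm
  · unfold S3U
    rw [Submodule.span_le]
    rintro _ ⟨a, b, c, ha, hb, hc, rfl⟩
    rw [← ext0_skip m i hi a ha, ← ext0_skip m i hi b hb, ← ext0_skip m i hi c hc]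
    refine ⟨lin (a ∘ skip m i) * lin (b ∘ skip m i) * lin (c ∘ skip m i),
      ((lin_hom _).mul (lin_hom _)).mul (lin_hom _), ?_⟩
    simp [phi, lin_ext0]
  · rw [Submodule.map_le_iff_le_comap]
    apply H3_le
    intro a b c
    refine Submodule.subset_span ⟨ext0 (skip m i) (Pi.single a 1), ext0 (skip m i) (Pi.single b 1),
      ext0 (skip m i) (Pi.single c 1), memU_skip _ _ _, memU_skip _ _ _, memU_skip _ _ _, ?_⟩
    simp [phi, lin_ext0, lin_single]

theorem finrank_phi {m n : ℕ} (e : Fin (m + 1) → Fin (n + 1)) (he : Function.Injective e)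
    (W : Submodule ℂ (MvPolynomial (Fin (m + 1)) ℂ)) :
    Module.finrank ℂ (W.map (phi e)) = Module.finrank ℂ W :=
  (Submodule.equivMapOfInjective (phi e) (rename_injective e he) W).finrank_eq.symm

/-- The core of all induction steps. -/
theorem core (m : ℕ) (i : Fin 3) (hi : 24 * (i : ℕ) ≤ m + 1) {ι : Type}
    (F₁ : Submodule ℂ (MvPolynomial (Fin (m + 1)) ℂ))
    (F₂ : Submodule ℂ (MvPolynomial (Fin (m + 24 + 1)) ℂ)) (h₁ : F₁ ≤ H3 m)
    (h₂ : F₂ ≤ H3 (m + 24))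
    (p p' : ι → Fin (m + 1) → ℂ) (q q' : ι → Fin (m + 24 + 1) → ℂ)
    (hq : ∀ k, memU i (q k)) (hq' : ∀ k, memU i (q' k)) :
    ∃ r r' : ι → Fin (m + 1) → ℂ, ∀ W : Submodule ℂ (MvPolynomial (Fin (m + 24 + 1)) ℂ),
      W ≤ H3 (m + 24) →
      F₁.map (phi (skip m i)) ≤ W →
      cone (fun k => ext0 (skip m i) (r k)) (fun k => ext0 (skip m i) (r' k)) ≤ W →
      F₂ ≤ W ⊔ S3U i →
      Module.finrank ℂ (F₁ ⊔ cone p p' : Submodule ℂ (MvPolynomial (Fin (m + 1)) ℂ)) +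
        Module.finrank ℂ (F₂ ⊔ cone q q' : Submodule ℂ (MvPolynomial (Fin (m + 24 + 1)) ℂ)) ≤
      Module.finrank ℂ W + (m + 3).choose 3 := by
  obtain ⟨r, r', hr₁, hr₂⟩ := merge (skip m i) F₁ F₂ h₁ h₂ p p' (fun k => q k ∘ skip m i)
    (fun k => q' k ∘ skip m i) _ (Module.finrank ℂ
      (F₂ ⊔ cone q q' : Submodule ℂ (MvPolynomial (Fin (m + 24 + 1)) ℂ))) le_rfl
    (by
      have l₁ : (fun k => ext0 (skip m i) (q k ∘ skip m i)) = q :=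
        funext fun k => ext0_skip m i hi _ (hq k)
      have l₂ : (fun k => ext0 (skip m i) (q' k ∘ skip m i)) = q' :=
        funext fun k => ext0_skip m i hi _ (hq' k)
      rw [l₁, l₂])
  refine ⟨r, r', fun W hW hF₁ hc hF₂ => ?_⟩
  have := fin_of_le hW
  have := fin_of_le (S3U_le (n := m + 24) i)
  have hA₁ : (F₁ ⊔ cone r r').map (phi (skip m i)) ≤ W := by
    rw [Submodule.map_sup]
    exact sup_le hF₁ ((phi_cone _ _ _).trans hc)
  have hA₂ : (F₁ ⊔ cone r r').map (phi (skip m i)) ≤ S3U i := by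
    rw [S3U_eq m i hi]
    exact Submodule.map_mono (sup_le h₁ (cone_le _ _))
  have e₁ : Module.finrank ℂ (F₁ ⊔ cone r r' : Submodule ℂ (MvPolynomial (Fin (m + 1)) ℂ)) ≤
      Module.finrank ℂ (W ⊓ S3U i : Submodule ℂ (MvPolynomial (Fin (m + 24 + 1)) ℂ)) := by
    rw [← finrank_phi (skip m i) (skip_inj m i)]
    exact Submodule.finrank_mono (le_inf hA₁ hA₂)
  have e₂ := Submodule.finrank_mono (R := ℂ) (sup_le hF₂ (hc.trans le_sup_left))
  have e₃ := Submodule.finrank_sup_add_finrank_inf_eq W (S3U i)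
  have e₄ : Module.finrank ℂ (S3U (n := m + 24) i) = (m + 3).choose 3 := by
    rw [S3U_eq m i hi, finrank_phi _ (skip_inj m i), finrank_H3]
  omega

/-! ### The induction steps -/

theorem cone_append {n s t : ℕ} (a a' : Fin s → Fin (n + 1) → ℂ) (b b' : Fin t → Fin (n + 1) → ℂ) :
    cone (Fin.append a b) (Fin.append a' b') = cone a a' ⊔ cone b b' := by
  apply le_antisymm
  · refine iSup_le fun k => ?_
    refine Fin.addCases (fun i => ?_) (fun i => ?_) k
    · rw [Fin.append_left, Fin.append_left]
      exact le_sup_of_le_left (le_iSup (fun i => tanCone 3 (a i) (a' i)) i)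
    · rw [Fin.append_right, Fin.append_right]
      exact le_sup_of_le_right (le_iSup (fun i => tanCone 3 (b i) (b' i)) i)
  · refine sup_le (iSup_le fun i => ?_) (iSup_le fun i => ?_)
    · refine le_trans (le_of_eq ?_)
        (le_iSup (fun k => tanCone 3 (Fin.append a b k) (Fin.append a' b' k)) (Fin.castAdd t i))
      rw [Fin.append_left, Fin.append_left]
    · refine le_trans (le_of_eq ?_)
        (le_iSup (fun k => tanCone 3 (Fin.append a b k) (Fin.append a' b' k)) (Fin.natAdd s i))
      rw [Fin.append_right, Fin.append_right]

theorem memU_append {n s t : ℕ} {i : Fin 3} {a : Fin s → Fin (n + 1) → ℂ}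
    {b : Fin t → Fin (n + 1) → ℂ} (ha : ∀ k, memU i (a k)) (hb : ∀ k, memU i (b k)) :
    ∀ k, memU i (Fin.append a b k) := by
  intro k
  refine Fin.addCases (fun j => ?_) (fun j => ?_) k
  · rw [Fin.append_left]; exact ha j
  · rw [Fin.append_right]; exact hb j

/-- The lower bound `d` is attained by `s` generic points. -/
def HasD (n s : ℕ) (d : ℤ) : Prop :=
  ∃ ℓ m : Fin s → Fin (n + 1) → ℂ, d ≤ (Module.finrank ℂ (cone ℓ m) : ℤ)

/-- The lower bound `d` is attained by `s` generic points and `a` points in `U_1`. -/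
def HasC (n s a : ℕ) (d : ℤ) : Prop :=
  ∃ (ℓ m : Fin s → Fin (n + 1) → ℂ) (p p' : Fin a → Fin (n + 1) → ℂ),
    (∀ k, memU 0 (p k)) ∧ (∀ k, memU 0 (p' k)) ∧
    d ≤ (Module.finrank ℂ (S3U 0 ⊔ cone p p' ⊔ cone ℓ m :
      Submodule ℂ (MvPolynomial (Fin (n + 1)) ℂ)) : ℤ)

/-- The same with points in `U_1` and `U_2`. -/
def HasB (n s a b : ℕ) (d : ℤ) : Prop :=
  ∃ (ℓ m : Fin s → Fin (n + 1) → ℂ) (p p' : Fin a → Fin (n + 1) → ℂ)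
    (q q' : Fin b → Fin (n + 1) → ℂ),
    (∀ k, memU 0 (p k)) ∧ (∀ k, memU 0 (p' k)) ∧ (∀ k, memU 1 (q k)) ∧ (∀ k, memU 1 (q' k)) ∧
    d ≤ (Module.finrank ℂ (S3U 0 ⊔ cone p p' ⊔ (S3U 1 ⊔ cone q q') ⊔ cone ℓ m :
      Submodule ℂ (MvPolynomial (Fin (n + 1)) ℂ)) : ℤ)

/-- The same with points in `U_1`, `U_2` and `U_3`. -/
def HasA (n a b c : ℕ) (d : ℤ) : Prop :=
  ∃ (p p' : Fin a → Fin (n + 1) → ℂ)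
    (q q' : Fin b → Fin (n + 1) → ℂ) (r r' : Fin c → Fin (n + 1) → ℂ),
    (∀ k, memU 0 (p k)) ∧ (∀ k, memU 0 (p' k)) ∧ (∀ k, memU 1 (q k)) ∧ (∀ k, memU 1 (q' k)) ∧
    (∀ k, memU 2 (r k)) ∧ (∀ k, memU 2 (r' k)) ∧
    d ≤ (Module.finrank ℂ (S3U 0 ⊔ cone p p' ⊔ (S3U 1 ⊔ cone q q') ⊔ (S3U 2 ⊔ cone r r') :
      Submodule ℂ (MvPolynomial (Fin (n + 1)) ℂ)) : ℤ)

theorem step_one (m s t : ℕ) (d₁ d₂ : ℤ) (h₁ : HasD m s d₁) (h₂ : HasC (m + 24) t s d₂) :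
    HasD (m + 24) (s + t) (d₁ + d₂ - ((m + 3).choose 3 : ℕ)) := by
  obtain ⟨x, x', hx⟩ := h₁
  obtain ⟨ℓ, ℓ', p, p', hp, hp', hd⟩ := h₂
  obtain ⟨r, r', hr⟩ := core m 0 (by simp) ⊥ (S3U 0 ⊔ cone ℓ ℓ') bot_le
    (sup_le (S3U_le _) (cone_le _ _)) x x' p p' hp hp'
  refine ⟨Fin.append (fun k => ext0 (skip m 0) (r k)) ℓ,
    Fin.append (fun k => ext0 (skip m 0) (r' k)) ℓ', ?_⟩
  have key := hr _ (cone_le (Fin.append (fun k => ext0 (skip m 0) (r k)) ℓ)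
    (Fin.append (fun k => ext0 (skip m 0) (r' k)) ℓ'))
    (by rw [Submodule.map_bot]; exact bot_le)
    (by rw [cone_append]; exact le_sup_left)
    (by rw [cone_append]; exact sup_le le_sup_right (le_sup_of_le_left le_sup_right))
  rw [bot_sup_eq, sup_right_comm] at key
  omega

theorem step_two (m t s u a : ℕ) (hm : 24 ≤ m + 1) (d₁ d₂ : ℤ) (h₁ : HasC m t s d₁)
    (h₂ : HasB (m + 24) u a t d₂) :
    HasC (m + 24) (t + u) (s + a) (d₁ + d₂ - ((m + 3).choose 3 : ℕ)) := by
  obtain ⟨x, x', y, y', hy, hy', hx⟩ := h₁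
  obtain ⟨ℓ, ℓ', p, p', q, q', hp, hp', hq, hq', hd⟩ := h₂
  obtain ⟨r, r', hr⟩ := core m 1 (by simpa using hm) (S3U 0 ⊔ cone y y')
    (S3U 0 ⊔ cone p p' ⊔ S3U 1 ⊔ cone ℓ ℓ')
    (sup_le (S3U_le _) (cone_le _ _))
    (sup_le (sup_le (sup_le (S3U_le _) (cone_le _ _)) (S3U_le _)) (cone_le _ _)) x x' q q' hq hq'
  refine ⟨Fin.append (fun k => ext0 (skip m 1) (r k)) ℓ,
    Fin.append (fun k => ext0 (skip m 1) (r' k)) ℓ',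
    Fin.append (fun k => ext0 (skip m 1) (y k)) p,
    Fin.append (fun k => ext0 (skip m 1) (y' k)) p',
    memU_append (fun k => memU_skip_lt m 1 0 (by decide) _ (hy k)) hp,
    memU_append (fun k => memU_skip_lt m 1 0 (by decide) _ (hy' k)) hp', ?_⟩
  rw [cone_append, cone_append]
  have key := hr (S3U 0 ⊔ (cone (fun k => ext0 (skip m 1) (y k)) (fun k => ext0 (skip m 1) (y' k))
      ⊔ cone p p') ⊔ (cone (fun k => ext0 (skip m 1) (r k)) (fun k => ext0 (skip m 1) (r' k))
      ⊔ cone ℓ ℓ'))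
    (sup_le (sup_le (S3U_le _) (sup_le (cone_le _ _) (cone_le _ _)))
      (sup_le (cone_le _ _) (cone_le _ _)))
    (by
      rw [Submodule.map_sup]
      refine le_sup_of_le_left (sup_le_sup
        (phi_S3U _ _ fun v hv => memU_skip_lt m 1 0 (by decide) _ hv)
        (le_sup_of_le_left (phi_cone _ _ _))))
    (le_sup_of_le_right le_sup_left)
    (sup_le (sup_le (sup_le
      (le_sup_of_le_left (le_sup_of_le_left le_sup_left))
      (le_sup_of_le_left (le_sup_of_le_left (le_sup_of_le_right le_sup_right))))
      le_sup_right)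
      (le_sup_of_le_left (le_sup_of_le_right le_sup_right)))
  have e : S3U 0 ⊔ cone p p' ⊔ S3U 1 ⊔ cone ℓ ℓ' ⊔ cone q q' =
      S3U 0 ⊔ cone p p' ⊔ (S3U 1 ⊔ cone q q') ⊔ cone ℓ ℓ' := by ac_rfl
  rw [e] at key
  omega

theorem step_three (m u a b a' b' : ℕ) (hm : 48 ≤ m + 1) (d₁ d₂ : ℤ) (h₁ : HasB m u a b d₁)
    (h₂ : HasA (m + 24) a' b' u d₂) :
    HasB (m + 24) u (a + a') (b + b') (d₁ + d₂ - ((m + 3).choose 3 : ℕ)) := by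
  obtain ⟨x, x', y, y', z, z', hy, hy', hz, hz', hx⟩ := h₁
  obtain ⟨p, p', q, q', w, w', hp, hp', hq, hq', hw, hw', hd⟩ := h₂
  obtain ⟨r, r', hr⟩ := core m 2 (by simpa using hm) (S3U 0 ⊔ cone y y' ⊔ (S3U 1 ⊔ cone z z'))
    (S3U 0 ⊔ cone p p' ⊔ (S3U 1 ⊔ cone q q') ⊔ S3U 2)
    (sup_le (sup_le (S3U_le _) (cone_le _ _)) (sup_le (S3U_le _) (cone_le _ _)))
    (sup_le (sup_le (sup_le (S3U_le _) (cone_le _ _)) (sup_le (S3U_le _) (cone_le _ _)))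
      (S3U_le _)) x x' w w' hw hw'
  refine ⟨fun k => ext0 (skip m 2) (r k), fun k => ext0 (skip m 2) (r' k),
    Fin.append (fun k => ext0 (skip m 2) (y k)) p,
    Fin.append (fun k => ext0 (skip m 2) (y' k)) p',
    Fin.append (fun k => ext0 (skip m 2) (z k)) q,
    Fin.append (fun k => ext0 (skip m 2) (z' k)) q',
    memU_append (fun k => memU_skip_lt m 2 0 (by decide) _ (hy k)) hp,
    memU_append (fun k => memU_skip_lt m 2 0 (by decide) _ (hy' k)) hp',
    memU_append (fun k => memU_skip_lt m 2 1 (by decide) _ (hz k)) hq,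
    memU_append (fun k => memU_skip_lt m 2 1 (by decide) _ (hz' k)) hq', ?_⟩
  rw [cone_append, cone_append]
  have key := hr (S3U 0 ⊔ (cone (fun k => ext0 (skip m 2) (y k)) (fun k => ext0 (skip m 2) (y' k))
      ⊔ cone p p') ⊔ (S3U 1 ⊔ (cone (fun k => ext0 (skip m 2) (z k))
        (fun k => ext0 (skip m 2) (z' k)) ⊔ cone q q')) ⊔
      cone (fun k => ext0 (skip m 2) (r k)) (fun k => ext0 (skip m 2) (r' k)))
    (sup_le (sup_le (sup_le (S3U_le _) (sup_le (cone_le _ _) (cone_le _ _)))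
      (sup_le (S3U_le _) (sup_le (cone_le _ _) (cone_le _ _)))) (cone_le _ _))
    (by
      rw [Submodule.map_sup, Submodule.map_sup, Submodule.map_sup]
      exact le_sup_of_le_left (sup_le_sup (sup_le_sup
        (phi_S3U _ _ fun v hv => memU_skip_lt m 2 0 (by decide) _ hv)
        (le_sup_of_le_left (phi_cone _ _ _))) (sup_le_sup
        (phi_S3U _ _ fun v hv => memU_skip_lt m 2 1 (by decide) _ hv)
        (le_sup_of_le_left (phi_cone _ _ _)))))
    le_sup_right
    (sup_le (le_sup_of_le_left (le_sup_of_le_left (sup_le_sup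
      (sup_le_sup le_rfl le_sup_right) (sup_le_sup le_rfl le_sup_right)))) le_sup_right)
  have e : S3U 0 ⊔ cone p p' ⊔ (S3U 1 ⊔ cone q q') ⊔ S3U 2 ⊔ cone w w' =
      S3U 0 ⊔ cone p p' ⊔ (S3U 1 ⊔ cone q q') ⊔ (S3U 2 ⊔ cone w w') := by ac_rfl
  rw [e] at key
  omega

theorem memU_single {n : ℕ} (i : Fin 3) (j : Fin (n + 1))
    (h : (j : ℕ) < 24 * (i : ℕ) ∨ 24 * (i : ℕ) + 24 ≤ j) : memU i (Pi.single j (1 : ℂ)) := by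
  intro k h1 h2
  rw [Pi.single_apply, if_neg]
  rintro rfl
  omega

theorem X_mem_S3U {n : ℕ} (i : Fin 3) (a b c : Fin (n + 1))
    (ha : (a : ℕ) < 24 * (i : ℕ) ∨ 24 * (i : ℕ) + 24 ≤ a)
    (hb : (b : ℕ) < 24 * (i : ℕ) ∨ 24 * (i : ℕ) + 24 ≤ b)
    (hc : (c : ℕ) < 24 * (i : ℕ) ∨ 24 * (i : ℕ) + 24 ≤ c) :
    (X a * X b * X c : MvPolynomial (Fin (n + 1)) ℂ) ∈ S3U i := by
  refine Submodule.subset_span ⟨_, _, _, memU_single i a ha, memU_single i b hb,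
    memU_single i c hc, ?_⟩
  rw [lin_single, lin_single, lin_single]

theorem memU_castLE {n : ℕ} (hn : 71 ≤ n) (i : Fin 3) (v : Fin (71 + 1) → ℂ) (hv : memU i v) :
    memU i (ext0 (Fin.castLE (by omega : 71 + 1 ≤ n + 1)) v) := by
  intro j h1 h2
  apply ext0_zero
  rintro k rfl
  exact hv k h1 h2

theorem step_A (n a b c : ℕ) (hn : 71 ≤ n) (h : HasA 71 a b c ((74 : ℕ).choose 3 : ℕ)) :
    HasA n a b c ((n + 3).choose 3 : ℕ) := by
  obtain ⟨p, p', q, q', w, w', hp, hp', hq, hq', hw, hw', hd⟩ := h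
  have hle : (S3U 0 ⊔ cone p p' ⊔ (S3U 1 ⊔ cone q q') ⊔ (S3U 2 ⊔ cone w w')) ≤ H3 71 :=
    sup_le (sup_le (sup_le (S3U_le _) (cone_le _ _)) (sup_le (S3U_le _) (cone_le _ _)))
      (sup_le (S3U_le _) (cone_le _ _))
  have heq := Submodule.eq_of_le_of_finrank_le hle (by
    rw [finrank_H3]; exact_mod_cast hd)
  let e : Fin (71 + 1) → Fin (n + 1) := Fin.castLE (by omega)
  refine ⟨fun k => ext0 e (p k), fun k => ext0 e (p' k), fun k => ext0 e (q k),
    fun k => ext0 e (q' k), fun k => ext0 e (w k), fun k => ext0 e (w' k),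
    fun k => memU_castLE hn _ _ (hp k), fun k => memU_castLE hn _ _ (hp' k),
    fun k => memU_castLE hn _ _ (hq k), fun k => memU_castLE hn _ _ (hq' k),
    fun k => memU_castLE hn _ _ (hw k), fun k => memU_castLE hn _ _ (hw' k), ?_⟩
  set W : Submodule ℂ (MvPolynomial (Fin (n + 1)) ℂ) :=
    S3U 0 ⊔ cone (fun k => ext0 e (p k)) (fun k => ext0 e (p' k)) ⊔
      (S3U 1 ⊔ cone (fun k => ext0 e (q k)) (fun k => ext0 e (q' k))) ⊔
      (S3U 2 ⊔ cone (fun k => ext0 e (w k)) (fun k => ext0 e (w' k))) with hW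
  have hWle : W ≤ H3 n :=
    sup_le (sup_le (sup_le (S3U_le _) (cone_le _ _)) (sup_le (S3U_le _) (cone_le _ _)))
      (sup_le (S3U_le _) (cone_le _ _))
  have hmap : (H3 71).map (phi e) ≤ W := by
    rw [← heq]
    simp only [Submodule.map_sup]
    exact sup_le_sup (sup_le_sup
      (sup_le_sup (phi_S3U _ _ fun v hv => memU_castLE hn _ v hv) (phi_cone _ _ _))
      (sup_le_sup (phi_S3U _ _ fun v hv => memU_castLE hn _ v hv) (phi_cone _ _ _)))
      (sup_le_sup (phi_S3U _ _ fun v hv => memU_castLE hn _ v hv) (phi_cone _ _ _))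
  have hS : ∀ i : Fin 3, S3U i ≤ W := by
    intro i
    fin_cases i
    · exact le_sup_of_le_left (le_sup_of_le_left le_sup_left)
    · exact le_sup_of_le_left (le_sup_of_le_right le_sup_left)
    · exact le_sup_of_le_right le_sup_left
  have hge : H3 n ≤ W := by
    apply H3_le
    intro x y z
    by_cases h72 : (x : ℕ) < 72 ∧ (y : ℕ) < 72 ∧ (z : ℕ) < 72
    · apply hmap
      refine ⟨X ⟨x, h72.1⟩ * X ⟨y, h72.2.1⟩ * X ⟨z, h72.2.2⟩,
        ((isHomogeneous_X _ _).mul (isHomogeneous_X _ _)).mul (isHomogeneous_X _ _), ?_⟩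
      simp [phi, e]
    · by_cases c0 : ((x : ℕ) < 0 ∨ 24 ≤ (x : ℕ)) ∧ ((y : ℕ) < 0 ∨ 24 ≤ (y : ℕ)) ∧
        ((z : ℕ) < 0 ∨ 24 ≤ (z : ℕ))
      · exact hS 0 (X_mem_S3U 0 x y z c0.1 c0.2.1 c0.2.2)
      by_cases c1 : ((x : ℕ) < 24 ∨ 48 ≤ (x : ℕ)) ∧ ((y : ℕ) < 24 ∨ 48 ≤ (y : ℕ)) ∧
        ((z : ℕ) < 24 ∨ 48 ≤ (z : ℕ))
      · exact hS 1 (X_mem_S3U 1 x y z c1.1 c1.2.1 c1.2.2)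
      have c2 : ((x : ℕ) < 48 ∨ 72 ≤ (x : ℕ)) ∧ ((y : ℕ) < 48 ∨ 72 ≤ (y : ℕ)) ∧
        ((z : ℕ) < 48 ∨ 72 ≤ (z : ℕ)) := by omega
      exact hS 2 (X_mem_S3U 2 x y z c2.1 c2.2.1 c2.2.2)
  rw [le_antisymm hWle hge, finrank_H3]

/-! ### Translation of the hypotheses -/

theorem finrank_mono_H3 {n : ℕ} {A B : Submodule ℂ (MvPolynomial (Fin (n + 1)) ℂ)}
    (hB : B ≤ H3 n) (h : A ≤ B) : Module.finrank ℂ A ≤ Module.finrank ℂ B := by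
  have := fin_of_le hB
  exact Submodule.finrank_mono h

/-- The binomial coefficient `C(n+3, 3)` as an integer. -/
@[irreducible] def chZ (n : ℕ) : ℤ := ((n + 3).choose 3 : ℕ)

theorem chZ_eq (n : ℕ) : (((n + 3).choose 3 : ℕ) : ℤ) = chZ n := by
  unfold chZ; rfl

theorem Wspace_zero {n s : ℕ} (ℓ m : Fin s → Fin (n + 1) → ℂ)
    (ℓ' m' : (i : Fin 3) → Fin ((![0, 0, 0] : Fin 3 → ℕ) i) → Fin (n + 1) → ℂ) :
    Wspace ℓ m ℓ' m' = cone ℓ m := by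
  unfold Wspace cone
  rw [sup_eq_right]
  refine iSup_le ?_
  rintro ⟨i, hi⟩
  exfalso
  fin_cases i <;> exact hi rfl

theorem hasD_of {n s : ℕ} (h : TStmt n s ![0, 0, 0]) : HasD n s (expdimZ n s ![0, 0, 0]) := by
  obtain ⟨ℓ, m, ℓ', m', -, h⟩ := h
  rw [Wspace_zero] at h
  exact ⟨ℓ, m, h.ge⟩

theorem hasC_of {n s a : ℕ} (h : TStmt n s ![a, 0, 0]) :
    HasC n s a (expdimZ n s ![a, 0, 0]) := by
  obtain ⟨ℓ, m, ℓ', m', hm, h⟩ := h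
  have h0 := hm 0
  refine ⟨ℓ, m, ℓ' 0, m' 0, fun k => (h0 k).1, fun k => (h0 k).2, ?_⟩
  rw [← h]
  norm_cast
  refine finrank_mono_H3 (sup_le (sup_le (S3U_le 0) (cone_le _ _)) (cone_le ℓ m)) (sup_le_sup (iSup_le ?_) le_rfl)
  rintro ⟨i, hi⟩
  fin_cases i
  · exact le_rfl
  · exact absurd rfl hi
  · exact absurd rfl hi

theorem hasB_of {n s a b : ℕ} (h : TStmt n s ![a, b, 0]) :
    HasB n s a b (expdimZ n s ![a, b, 0]) := by
  obtain ⟨ℓ, m, ℓ', m', hm, h⟩ := h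
  have h0 := hm 0
  have h1 := hm 1
  refine ⟨ℓ, m, ℓ' 0, m' 0, ℓ' 1, m' 1, fun k => (h0 k).1, fun k => (h0 k).2,
    fun k => (h1 k).1, fun k => (h1 k).2, ?_⟩
  rw [← h]
  norm_cast
  refine finrank_mono_H3 (sup_le (sup_le (sup_le (S3U_le 0) (cone_le _ _))
    (sup_le (S3U_le 1) (cone_le _ _))) (cone_le ℓ m)) (sup_le_sup (iSup_le ?_) le_rfl)
  rintro ⟨i, hi⟩
  fin_cases i
  · exact le_sup_left
  · exact le_sup_right
  · exact absurd rfl hi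

theorem hasA_of {n a b c : ℕ} (h : TStmt n 0 ![a, b, c]) :
    HasA n a b c (expdimZ n 0 ![a, b, c]) := by
  obtain ⟨ℓ, m, ℓ', m', hm, h⟩ := h
  have h0 := hm 0
  have h1 := hm 1
  have h2 := hm 2
  refine ⟨ℓ' 0, m' 0, ℓ' 1, m' 1, ℓ' 2, m' 2, fun k => (h0 k).1, fun k => (h0 k).2,
    fun k => (h1 k).1, fun k => (h1 k).2, fun k => (h2 k).1, fun k => (h2 k).2, ?_⟩
  rw [← h]
  norm_cast
  refine finrank_mono_H3 (sup_le (sup_le (sup_le (S3U_le 0) (cone_le _ _))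
    (sup_le (S3U_le 1) (cone_le _ _))) (sup_le (S3U_le 2) (cone_le _ _))) (sup_le (iSup_le ?_) (iSup_le fun i => i.elim0))
  rintro ⟨i, hi⟩
  fin_cases i
  · exact le_sup_of_le_left le_sup_left
  · exact le_sup_of_le_left le_sup_right
  · exact le_sup_right

/-! ### The upper bound -/

theorem finrank_mulU_le {n : ℕ} (f : MvPolynomial (Fin (n + 1)) ℂ) :
    Module.finrank ℂ (mulU f) ≤ n + 1 := by
  unfold mulU
  refine (finrank_range_le_card _).trans ?_
  simp

theorem lin_mul_mem {n : ℕ} (f : MvPolynomial (Fin (n + 1)) ℂ) (v : Fin (n + 1) → ℂ) :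
    f * lin v ∈ mulU f := by
  unfold lin mulU
  rw [Finset.mul_sum]
  refine Submodule.sum_mem _ fun j _ => ?_
  have : f * (C (v j) * X j) = v j • (f * X j) := by
    rw [smul_eq_C_mul]; ring
  rw [this]
  exact Submodule.smul_mem _ _ (Submodule.subset_span ⟨j, rfl⟩)

theorem mulU_zero {n : ℕ} : mulU (0 : MvPolynomial (Fin (n + 1)) ℂ) = ⊥ := by
  unfold mulU
  simp

theorem finrank_tanCone_le {n : ℕ} (ℓ m : Fin (n + 1) → ℂ) :
    Module.finrank ℂ (tanCone 3 ℓ m) ≤ 2 * n + 1 := by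
  rw [tanCone_eq]
  have f1 : FiniteDimensional ℂ (mulU (lin ℓ ^ 2)) :=
    FiniteDimensional.span_of_finite ℂ (Set.finite_range _)
  have f2 : FiniteDimensional ℂ (mulU (lin ℓ * lin m)) :=
    FiniteDimensional.span_of_finite ℂ (Set.finite_range _)
  have b1 := finrank_mulU_le (lin ℓ ^ 2)
  have b2 := finrank_mulU_le (lin ℓ * lin m)
  by_cases hz : lin ℓ * lin m = 0
  · rw [hz, mulU_zero, sup_bot_eq]
    omega
  · have e := Submodule.finrank_sup_add_finrank_inf_eq (mulU (lin ℓ ^ 2)) (mulU (lin ℓ * lin m))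
    have hpos : 0 < Module.finrank ℂ (mulU (lin ℓ ^ 2) ⊓ mulU (lin ℓ * lin m) :
        Submodule ℂ (MvPolynomial (Fin (n + 1)) ℂ)) := by
      rw [Module.finrank_pos_iff, Submodule.nontrivial_iff_ne_bot]
      rw [Submodule.ne_bot_iff]
      refine ⟨lin ℓ ^ 2 * lin m, ⟨lin_mul_mem _ _, ?_⟩, ?_⟩
      · have : lin ℓ ^ 2 * lin m = (lin ℓ * lin m) * lin ℓ := by ring
        rw [this]
        exact lin_mul_mem _ _
      · intro h
        have : lin ℓ * (lin ℓ * lin m) = 0 := by rw [← h]; ring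
        rcases mul_eq_zero.mp this with h' | h'
        · exact hz (by rw [h', zero_mul])
        · exact hz h'
    omega

theorem finrank_cone_le {n s : ℕ} (ℓ m : Fin s → Fin (n + 1) → ℂ) :
    Module.finrank ℂ (cone ℓ m) ≤ (2 * n + 1) * s := by
  induction s with
  | zero =>
    have : cone ℓ m = ⊥ := by
      unfold cone
      exact iSup_of_empty _
    rw [this]
    simp
  | succ s ih =>
    have hle : cone ℓ m ≤ tanCone 3 (ℓ 0) (m 0) ⊔
        cone (fun i : Fin s => ℓ i.succ) (fun i : Fin s => m i.succ) := by
      refine iSup_le fun i => ?_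
      refine Fin.cases le_sup_left (fun j => le_sup_of_le_right ?_) i
      exact le_iSup (fun i : Fin s => tanCone 3 (ℓ i.succ) (m i.succ)) j
    have f1 := fin_of_le (tanCone_le (ℓ 0) (m 0))
    have f2 := fin_of_le (cone_le (fun i : Fin s => ℓ i.succ) (fun i : Fin s => m i.succ))
    have h1 := Submodule.finrank_mono hle
    have h2 := Submodule.finrank_add_le_finrank_add_finrank (tanCone 3 (ℓ 0) (m 0))
      (cone (fun i : Fin s => ℓ i.succ) (fun i : Fin s => m i.succ))
    have h3 := ih (fun i : Fin s => ℓ i.succ) (fun i : Fin s => m i.succ)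
    have h4 := finrank_tanCone_le (ℓ 0) (m 0)
    rw [Nat.mul_succ]
    omega

/-! ### Expected dimensions -/

theorem expdim_zero (n s : ℕ) :
    expdimZ n s ![0, 0, 0] = min ((2 * (n : ℤ) + 1) * (s : ℤ)) (chZ n) := by
  have hk : kcount ![0, 0, 0] = 0 := by decide
  unfold expdimZ
  rw [hk, chZ_eq]
  simp [altsum]

theorem expdim_one (n s a : ℕ) (ha : a ≠ 0) :
    expdimZ (n + 24) s ![a, 0, 0] =
      min (chZ n + 48 * (a : ℤ) + (2 * ((n + 24 : ℕ) : ℤ) + 1) * (s : ℤ)) (chZ (n + 24)) := by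
  have hk : kcount ![a, 0, 0] = 1 := by
    unfold kcount
    rw [Finset.card_eq_one]
    refine ⟨0, ?_⟩
    ext i
    fin_cases i <;> simp [ha]
  have h1 : n + 24 + 3 - 24 * 1 = n + 3 := by omega
  unfold expdimZ altsum
  rw [hk, Finset.Icc_self, Finset.sum_singleton, h1, chZ_eq, chZ_eq]
  simp

theorem expdim_two (n s a b : ℕ) (ha : a ≠ 0) (hb : b ≠ 0) :
    expdimZ (n + 48) s ![a, b, 0] =
      min (2 * chZ (n + 24) - chZ n + 48 * ((a : ℤ) + (b : ℤ))
        + (2 * ((n + 48 : ℕ) : ℤ) + 1) * (s : ℤ)) (chZ (n + 48)) := by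
  have hk : kcount ![a, b, 0] = 2 := by
    unfold kcount
    rw [Finset.card_eq_two]
    refine ⟨0, 1, by decide, ?_⟩
    ext i
    fin_cases i <;> simp [ha, hb]
  have h1 : n + 48 + 3 - 24 * 1 = n + 24 + 3 := by omega
  have h2 : n + 48 + 3 - 24 * 2 = n + 3 := by omega
  have h3 : Finset.Icc 1 2 = {1, 2} := by decide
  unfold expdimZ altsum
  rw [hk, h3, Finset.sum_pair (by decide), h1, h2, chZ_eq, chZ_eq, chZ_eq]
  simp [sub_eq_add_neg]

theorem expdim_three : expdimZ 71 0 ![96, 96, 96] = ((74 : ℕ).choose 3 : ℕ) := by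
  have hk : kcount ![96, 96, 96] = 3 := by decide
  have h3 : Finset.Icc 1 3 = {1, 2, 3} := by decide
  unfold expdimZ altsum
  rw [hk, h3]
  simp
  norm_num [Nat.choose]

theorem choose_three (n : ℕ) : 6 * chZ n = (n + 1) * (n + 2) * (n + 3) := by
  have a1 : (n + 2 + 1) * (n + 2).choose 2 = (n + 3).choose 3 * 3 :=
    Nat.add_one_mul_choose_eq (n + 2) 2
  have a2 : (n + 1 + 1) * (n + 1).choose 1 = (n + 2).choose 2 * 2 :=
    Nat.add_one_mul_choose_eq (n + 1) 1
  rw [Nat.choose_one_right] at a2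
  have e : (6 * (n + 3).choose 3 : ℕ) = (n + 1) * (n + 2) * (n + 3) := by
    calc 6 * (n + 3).choose 3 = 2 * ((n + 3).choose 3 * 3) := by ring
      _ = (n + 3) * ((n + 2).choose 2 * 2) := by rw [← a1]; ring
      _ = _ := by rw [← a2]; ring
  rw [← chZ_eq]
  exact_mod_cast e

theorem s1_step (n : ℕ) : s1 (n + 24) = s1 n + tfun (n + 24) := by
  have h1 : (n + 24) / 24 = n / 24 + 1 := by omega
  have h2 : (n + 24) % 24 = n % 24 := by omega
  have h3 : tfun (n + 24) = 4 * (24 * (n / 24) + n % 24) + 59 := by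
    unfold tfun; omega
  rw [h3]
  unfold s1
  rw [h1, h2]
  ring

theorem t_step (n : ℕ) (hn : 10 ≤ n) : tfun (n + 24) = tfun n + 96 := by
  unfold tfun; omega

theorem s1_bounds (n : ℕ) :
    48 * s1 n ≤ 4 * n ^ 2 + 22 * n + 33 ∧ 4 * n ^ 2 + 22 * n + 33 < 48 * s1 n + 48 := by
  have h1 : n = 24 * (n / 24) + n % 24 := by omega
  have h2 : 4 * n ^ 2 + 22 * n + 33 = 48 * (48 * (n / 24) ^ 2 + (11 + 4 * (n % 24)) * (n / 24))
      + (4 * (n % 24) ^ 2 + 22 * (n % 24) + 33) := by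
    generalize n / 24 = k at *
    generalize n % 24 = r at *
    subst h1
    ring
  unfold s1
  omega

theorem s1_pos (n : ℕ) (hn : 8 ≤ n) : s1 n ≠ 0 := by
  have := (s1_bounds n).2
  intro h
  nlinarith

/-- Induction with step `24`. -/
theorem ind24 (P : ℕ → Prop) (lo : ℕ) (h : ∀ n, lo ≤ n → n < lo + 24 → P n)
    (hs : ∀ n, lo ≤ n → P n → P (n + 24)) : ∀ n, lo ≤ n → P n := by
  intro n
  induction n using Nat.strong_induction_on with
  | _ n ih =>
    intro hn
    by_cases hlt : n < lo + 24
    · exact h n hn hlt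
    · have := hs (n - 24) (by omega) (ih (n - 24) (by omega) (by omega))
      rwa [Nat.sub_add_cancel (by omega)] at this

theorem HasC.mono {n s a : ℕ} {d d' : ℤ} (h : HasC n s a d) (hd : d' ≤ d) : HasC n s a d' := by
  obtain ⟨ℓ, m, p, p', h1, h2, h3⟩ := h
  exact ⟨ℓ, m, p, p', h1, h2, hd.trans h3⟩

theorem HasD.mono {n s : ℕ} {d d' : ℤ} (h : HasD n s d) (hd : d' ≤ d) : HasD n s d' := by
  obtain ⟨ℓ, m, h3⟩ := h
  exact ⟨ℓ, m, hd.trans h3⟩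

theorem tfun_cast (n : ℕ) (hn : 10 ≤ n) : (tfun n : ℤ) = 4 * n - 37 := by
  unfold tfun; omega

/-- Corollary 3.8: the base cases (a)–(d) imply that `T(n, s_i(n); 0, 0, 0)` is true for
every `n ≥ 8`. -/
theorem base_cases_imply_all (si : ℕ → ℕ) (hsi : si = s1 ∨ si = s2)
    (ha : TStmt 71 0 ![96, 96, 96])
    (hb : ∀ n, 56 ≤ n → n ≤ 79 → TStmt n 96 ![tfun (n - 24), tfun (n - 24), 0])
    (hc : ∀ n, 32 ≤ n → n ≤ 55 → TStmt n (tfun n) ![si (n - 24), 0, 0])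
    (hd : ∀ n, 8 ≤ n → n ≤ 31 → TStmt n (si n) ![0, 0, 0]) :
    ∀ n, 8 ≤ n → TStmt n (si n) ![0, 0, 0] := by
  have hstep : ∀ n, si (n + 24) = si n + tfun (n + 24) := by
    intro n
    rcases hsi with rfl | rfl
    · exact s1_step n
    · unfold s2; rw [s1_step]; omega
  have hpos : ∀ n, 8 ≤ n → si n ≠ 0 := by
    intro n hn
    rcases hsi with rfl | rfl
    · exact s1_pos n hn
    · unfold s2; omega
  -- Level A
  have hA : ∀ n, 71 ≤ n → HasA n 96 96 96 (chZ n) := by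
    intro n hn
    rw [← chZ_eq]
    exact step_A n _ _ _ hn (expdim_three ▸ hasA_of ha)
  -- Level B
  have hB : ∀ n, 56 ≤ n → HasB n 96 (tfun (n - 24)) (tfun (n - 24)) (chZ n) := by
    apply ind24
    · intro n h1 h2
      have h := hasB_of (hb n h1 (by omega))
      obtain ⟨k, rfl⟩ : ∃ k, n = k + 48 := ⟨n - 48, by omega⟩
      have ht : tfun (k + 48 - 24) ≠ 0 := by unfold tfun; omega
      rw [expdim_two k 96 _ _ ht ht] at h
      have e : k + 48 - 24 = k + 24 := by omega
      rw [e] at h ⊢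
      rw [tfun_cast (k + 24) (by omega)] at h
      have c0 := choose_three k
      have c1 := choose_three (k + 24)
      have c2 := choose_three (k + 48)
      rw [min_eq_right] at h
      · exact h
      · push_cast at c1 c2 ⊢
        nlinarith
    · intro n hn h
      have := step_three n _ _ _ _ _ (by omega) _ _ h (hA (n + 24) (by omega))
      have e : n + 24 - 24 = (n - 24) + 24 := by omega
      rw [e, t_step (n - 24) (by omega)]
      rw [chZ_eq, add_sub_cancel_left] at this
      exact this
  -- Level C
  have hC : ∀ n, 32 ≤ n → HasC n (tfun n) (si (n - 24))
      (min ((chZ (n - 24)) + 48 * (si (n - 24) : ℤ) + (2 * (n : ℤ) + 1) * (tfun n))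
        (chZ n)) := by
    apply ind24
    · intro n h1 h2
      have h := hasC_of (hc n h1 (by omega))
      obtain ⟨k, rfl⟩ : ∃ k, n = k + 24 := ⟨n - 24, by omega⟩
      rw [expdim_one _ _ _ (hpos _ (by omega))] at h
      exact h
    · intro n hn h
      have h' := step_two n _ _ _ _ (by omega) _ _ h (hB (n + 24) (by omega))
      rw [chZ_eq] at h'
      obtain ⟨k, rfl⟩ : ∃ k, n = k + 24 := ⟨n - 24, by omega⟩
      simp only [Nat.add_sub_cancel] at h' ⊢
      rw [t_step (k + 24) (by omega), hstep k]
      refine h'.mono ?_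
      have c0 := choose_three k
      have c1 := choose_three (k + 24)
      have c2 := choose_three (k + 24 + 24)
      push_cast at c1 c2 ⊢
      rw [tfun_cast (k + 24) (by omega)]
      push_cast
      rcases min_choice ((chZ k) + 48 * (si k : ℤ) +
        (2 * ((k : ℤ) + 24) + 1) * (4 * ((k : ℤ) + 24) - 37)) (chZ (k + 24)) with
        hm | hm
      · rw [hm]
        refine (min_le_left _ _).trans ?_
        nlinarith
      · rw [hm]
        refine (min_le_right _ _).trans ?_
        linarith
  -- Level D
  have hD : ∀ n, 8 ≤ n → HasD n (si n)
      (min ((2 * (n : ℤ) + 1) * (si n)) (chZ n)) := by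
    apply ind24
    · intro n h1 h2
      have h := hasD_of (hd n h1 (by omega))
      rw [expdim_zero] at h
      exact h
    · intro n hn h
      have h' := step_one n _ _ _ _ h (hC (n + 24) (by omega))
      rw [chZ_eq] at h'
      rw [hstep n]
      refine h'.mono ?_
      have c0 := choose_three n
      have c1 := choose_three (n + 24)
      obtain ⟨b1, b2⟩ := s1_bounds n
      have hodd : 4 * n ^ 2 + 22 * n + 33 < 48 * s1 n + 47 + 1 := b2
      zify at b1 hodd
      have hn' : (8 : ℤ) ≤ n := by exact_mod_cast hn
      push_cast at c1 ⊢
      rw [tfun_cast (n + 24) (by omega)]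
      push_cast
      rcases hsi with rfl | rfl
      · have i1 : (2 * (n : ℤ) + 1) * s1 n ≤ (chZ n) := by nlinarith
        have i2 : (chZ n) + 48 * s1 n +
            (2 * ((n : ℤ) + 24) + 1) * (4 * ((n : ℤ) + 24) - 37) ≤
            (chZ (n + 24)) := by nlinarith
        rw [min_eq_left i1, min_eq_left i2]
        refine (min_le_left _ _).trans ?_
        nlinarith
      · have i0 : 4 * (n : ℤ) ^ 2 + 22 * n + 34 ≤ 48 * (s2 n : ℤ) := by
          unfold s2; push_cast; linarith
        have i1 : (chZ n) ≤ (2 * (n : ℤ) + 1) * s2 n := by nlinarith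
        have i2 : (chZ (n + 24)) ≤ (chZ n) + 48 * s2 n +
            (2 * ((n : ℤ) + 24) + 1) * (4 * ((n : ℤ) + 24) - 37) := by nlinarith
        rw [min_eq_right i1, min_eq_right i2]
        refine (min_le_right _ _).trans ?_
        linarith
  -- Conclusion
  intro n hn
  obtain ⟨ℓ, m, h⟩ := hD n hn
  refine ⟨ℓ, m, fun _ _ _ => 0, fun _ _ _ => 0, fun i j => ⟨fun _ _ _ => rfl, fun _ _ _ => rfl⟩, ?_⟩
  rw [Wspace_zero, expdim_zero]
  refine le_antisymm (le_min ?_ ?_) h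
  · exact_mod_cast finrank_cone_le ℓ m
  · have := Submodule.finrank_mono (cone_le ℓ m)
    rw [finrank_H3] at this
    rw [← chZ_eq]
    exact_mod_cast this
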